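/- Let (β_k)_{k≥1} be the increasing enumeration of the moduli of the zeros of U₊ on the open ray arg z = π/3, and set δ_k = (√3·β_k/2)³. Then δ_k = (√3/4)·(3/2)³·(πk − 5π/12 + O(1/k))² as k → ∞; equivalently, there is a constant C > 0 such that |√(δ_k/((√3/4)·(3/2)³)) − (πk − 5π/12)| ≤ C/k for all k ≥ 1. -/

import Mathlib

open Complex MeasureTheory Real

noncomputable section

/-- `w` is an entire solution of the Airy equation `w'' = z·w`
with prescribed (real) values of `w` and `w'` at the origin. -/
def IsAiry (w : ℂ → ℂ) (w0 w0' : ℝ) : Prop :=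
  Differentiable ℂ w ∧ Differentiable ℂ (deriv w) ∧
  (∀ z : ℂ, deriv (deriv w) z = z * w z) ∧
  w 0 = (w0 : ℂ) ∧ deriv w 0 = (w0' : ℂ)

/-- `Ai` is the standard Airy function of the first kind. -/
def IsAiryAi (Ai : ℂ → ℂ) : Prop :=
  IsAiry Ai ((3 : ℝ) ^ (-(2 : ℝ)/3) / Real.Gamma (2/3))
    (-((3 : ℝ) ^ (-(1 : ℝ)/3)) / Real.Gamma (1/3))

/-- `Bi` is the standard Airy function of the second kind. -/
def IsAiryBi (Bi : ℂ → ℂ) : Prop :=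
  IsAiry Bi ((3 : ℝ) ^ (-(1 : ℝ)/6) / Real.Gamma (2/3))
    ((3 : ℝ) ^ ((1 : ℝ)/6) / Real.Gamma (1/3))

/-- `U₋ = -√3·Ai + Bi`. -/
def Uminus (Ai Bi : ℂ → ℂ) : ℂ → ℂ := fun z => -(Real.sqrt 3 : ℂ) * Ai z + Bi z

/-- `U₊ = √3·Ai + Bi`. -/
def Uplus (Ai Bi : ℂ → ℂ) : ℂ → ℂ := fun z => (Real.sqrt 3 : ℂ) * Ai z + Bi z

/-- The moduli of the zeros of `U` on the open ray `arg z = π/3`. -/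
def rayZeroModuli (U : ℂ → ℂ) : Set ℝ :=
  {r : ℝ | 0 < r ∧ U ((r : ℂ) * Complex.exp ((π/3 : ℝ) * Complex.I)) = 0}

/-- A real solution of `y'' = -x y` on the line with `y(0) > 0` and `y'(0) = 0`
is positive on `[0, 1]`. -/
lemma pos_on_unit_interval {y y' : ℝ → ℝ} (hy : ∀ x, HasDerivAt y (y' x) x)
    (hy' : ∀ x, HasDerivAt y' (-x * y x) x) (h0 : 0 < y 0) (h0' : y' 0 = 0)
    {x : ℝ} (hx : x ∈ Set.Icc (0 : ℝ) 1) : 0 < y x := by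
  have hc : Continuous y := continuous_iff_continuousAt.2 fun x => (hy x).continuousAt
  obtain ⟨m, hm, hmax⟩ := isCompact_Icc.exists_isMaxOn (Set.nonempty_Icc.2 zero_le_one)
    (hc.abs.continuousOn (s := Set.Icc (0 : ℝ) 1))
  set M := |y m| with hM
  have hb : ∀ t ∈ Set.Icc (0 : ℝ) 1, |y t| ≤ M := fun t ht => hmax ht
  have mono : ∀ {f f' : ℝ → ℝ}, (∀ t, HasDerivAt f (f' t) t) →
      (∀ t ∈ Set.Icc (0 : ℝ) 1, 0 ≤ f' t) → ∀ t ∈ Set.Icc (0 : ℝ) 1, f 0 ≤ f t := by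
    intro f f' hf hf' t ht
    refine monotoneOn_of_deriv_nonneg (convex_Icc (0 : ℝ) 1)
      (fun s _ => (hf s).continuousAt.continuousWithinAt)
      (fun s _ => (hf s).differentiableAt.differentiableWithinAt) ?_
      (Set.left_mem_Icc.2 zero_le_one) ht ht.1
    intro s hs
    rw [(hf s).deriv]
    exact hf' s (interior_subset hs)
  have hsq : ∀ t : ℝ, HasDerivAt (fun t => M * t ^ 2 / 2) (M * t) t := fun t => by
    refine (((hasDerivAt_pow 2 t).const_mul M).div_const 2).congr_deriv ?_
    norm_num; ring
  have hcu : ∀ t : ℝ, HasDerivAt (fun t => M * t ^ 3 / 6) (M * t ^ 2 / 2) t := fun t => by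
    refine (((hasDerivAt_pow 3 t).const_mul M).div_const 6).congr_deriv ?_
    norm_num; ring
  have h1 : ∀ t ∈ Set.Icc (0 : ℝ) 1, 0 ≤ y' t + M * t ^ 2 / 2 := by
    intro t ht
    have := mono (fun t => (hy' t).add (hsq t))
      (fun s hs => by nlinarith [abs_le.1 (hb s hs), hs.1]) t ht
    simpa [h0'] using this
  have h2 : ∀ t ∈ Set.Icc (0 : ℝ) 1, 0 ≤ M * t ^ 2 / 2 - y' t := by
    intro t ht
    have := mono (fun t => (hsq t).sub (hy' t))
      (fun s hs => by nlinarith [abs_le.1 (hb s hs), hs.1]) t ht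
    simpa [h0'] using this
  have h3 : ∀ t ∈ Set.Icc (0 : ℝ) 1, y 0 ≤ y t + M * t ^ 3 / 6 := by
    intro t ht
    simpa using mono (fun t => (hy t).add (hcu t)) h1 t ht
  have h4 : ∀ t ∈ Set.Icc (0 : ℝ) 1, y t - M * t ^ 3 / 6 ≤ y 0 := by
    intro t ht
    have := mono (fun t => (hcu t).sub (hy t)) h2 t ht
    simp at this
    linarith
  have hM0 : 0 ≤ M := abs_nonneg _
  have hcube : ∀ t ∈ Set.Icc (0 : ℝ) 1, M * t ^ 3 ≤ M := fun t ht =>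
    mul_le_of_le_one_right hM0 (pow_le_one₀ ht.1 ht.2)
  have hMle : M ≤ y 0 + M / 6 := by
    rw [hM]
    refine abs_le.2 ⟨?_, ?_⟩
    · linarith [h3 m hm, hcube m hm]
    · linarith [h4 m hm, hcube m hm]
  linarith [h3 x hx, hcube x hx]

/-- The derivative of `(2/3) x^(3/2)`. -/
lemma hasDerivAt_two_thirds_mul_sqrt {x : ℝ} (hx : 0 < x) :
    HasDerivAt (fun x => 2 / 3 * (x * √x)) (√x) x := by
  have hs : 0 < √x := Real.sqrt_pos.2 hx
  refine (((hasDerivAt_id x).mul (Real.hasDerivAt_sqrt hx.ne')).const_mul (2 / 3)).congr_deriv ?_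
  have hss : x = √x * √x := (Real.mul_self_sqrt hx.le).symm
  simp only [id]
  rw [show x * (1 / (2 * √x)) = √x / 2 by
    rw [mul_one_div, div_eq_div_iff (by positivity) two_ne_zero]; linear_combination 2 * hss]
  ring

lemma hasDerivAt_inv_mul_sqrt {x : ℝ} (hx : 0 < x) :
    HasDerivAt (fun x => 5 / 24 * (x * √x)⁻¹) (-(5 / (16 * (x ^ 2 * √x)))) x := by
  have hs : 0 < √x := Real.sqrt_pos.2 hx
  have h := ((hasDerivAt_two_thirds_mul_sqrt hx).inv (by positivity)).const_mul (5 / 36)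
  refine (h.congr_of_eventuallyEq ?_).congr_deriv ?_
  · filter_upwards with t
    simp only [Pi.inv_apply, mul_inv]
    ring
  · field_simp
    ring

/-- Prüfer phase of a nontrivial solution of `y'' = -x y` on `[1, ∞)`: the phase is
`(2/3) x^(3/2) + φ(x)` with `φ` increasing and convergent. -/
lemma exists_phase {y y' : ℝ → ℝ} (hy : ∀ x, HasDerivAt y (y' x) x)
    (hy' : ∀ x, HasDerivAt y' (-x * y x) x) (hne : ∀ x, y x = 0 → y' x ≠ 0) (h1 : 0 < y 1) :
    ∃ φ : ℝ → ℝ, ∃ L : ℝ, ContinuousOn φ (Set.Ici 1) ∧ MonotoneOn φ (Set.Ici 1) ∧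
      0 < 2 / 3 + φ 1 ∧ 2 / 3 + φ 1 < π ∧
      Filter.Tendsto φ Filter.atTop (nhds L) ∧
      (∀ x, 1 ≤ x → φ x ≤ L ∧ L ≤ φ x + 5 / 24 * (x * √x)⁻¹) ∧
      ∀ x, 1 ≤ x → (y x = 0 ↔ Real.sin (2 / 3 * (x * √x) + φ x) = 0) := by
  have hc : Continuous y := continuous_iff_continuousAt.2 fun x => (hy x).continuousAt
  set P : ℝ → ℝ := fun x => y' x + y x / (4 * x) with hP
  set Q : ℝ → ℝ := fun x => √x * y x with hQ
  set R : ℝ → ℝ := fun x => P x ^ 2 + Q x ^ 2 with hR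
  have hRpos : ∀ x, 0 < x → 0 < R x := by
    intro x hx
    have hs : 0 < √x := Real.sqrt_pos.2 hx
    by_cases h : y x = 0
    · have := hne x h
      simp only [hR, hP, hQ, h]
      simp
      positivity
    · have : 0 < Q x ^ 2 := by simp only [hQ]; positivity
      simp only [hR]
      positivity
  have hPd : ∀ x, 0 < x → HasDerivAt P (-x * y x + y' x / (4 * x) - y x / (4 * x ^ 2)) x := by
    intro x hx
    refine ((hy' x).add ((hy x).div ((hasDerivAt_id x).const_mul 4) (by simp [hx.ne']))).congr_deriv ?_
    simp only [id]
    field_simp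
    ring
  have hQd : ∀ x, 0 < x → HasDerivAt Q (√x * y' x + y x / (2 * √x)) x := by
    intro x hx
    refine ((Real.hasDerivAt_sqrt hx.ne').mul (hy x)).congr_deriv ?_
    ring
  set e : ℝ → ℝ := fun x => 5 * y x ^ 2 / (16 * (x * √x * R x)) with he
  have hec : ∀ x, 0 < x → ContinuousAt e x := by
    intro x hx
    have hs : 0 < √x := Real.sqrt_pos.2 hx
    have := hRpos x hx
    refine ContinuousAt.div (by fun_prop) ?_ (by positivity)
    have h1 := (hPd x hx).continuousAt
    have h2 := (hQd x hx).continuousAt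
    have h3 : ContinuousAt R x := (h1.pow 2).add (h2.pow 2)
    exact continuousAt_const.mul ((continuousAt_id.mul Real.continuous_sqrt.continuousAt).mul h3)
  have he0 : ∀ x, 0 < x → 0 ≤ e x := by
    intro x hx
    have := hRpos x hx
    simp only [he]; positivity
  have hele : ∀ x, 0 < x → e x ≤ 5 / (16 * (x ^ 2 * √x)) := by
    intro x hx
    have hs : 0 < √x := Real.sqrt_pos.2 hx
    have hRx := hRpos x hx
    have hxy : x * y x ^ 2 ≤ R x := by
      simp only [hR, hQ, mul_pow, Real.sq_sqrt hx.le]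
      nlinarith [sq_nonneg (P x)]
    simp only [he]
    rw [div_le_div_iff₀ (by positivity) (by positivity)]
    have : 0 ≤ 80 * (x * √x) := by positivity
    nlinarith [mul_le_mul_of_nonneg_left hxy this]
  set a := Real.arctan (P 1 / Q 1) with ha
  set φ : ℝ → ℝ := fun x => (π / 2 - a - 2 / 3) + ∫ t in (1 : ℝ)..x, e t with hφ
  have hφd : ∀ x, 0 < x → HasDerivAt φ (e x) x := by
    intro x hx
    have hco : ContinuousOn e (Set.Ioi 0) := fun t ht => (hec t ht).continuousWithinAt
    refine (intervalIntegral.integral_hasDerivAt_right ?_ ?_ (hec x hx)).const_add _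
    · refine (hco.mono fun t ht => ?_).intervalIntegrable
      exact lt_of_lt_of_le (lt_min one_pos hx) ht.1
    · exact hco.stronglyMeasurableAtFilter isOpen_Ioi x hx
  have hφ1 : φ 1 = π / 2 - a - 2 / 3 := by simp [hφ]
  have hpos : ∀ {x : ℝ}, 1 ≤ x → 0 < x := fun h => lt_of_lt_of_le one_pos h
  have hφc : ContinuousOn φ (Set.Ici 1) := fun x hx =>
    (hφd x (hpos hx)).continuousAt.continuousWithinAt
  have hφm : MonotoneOn φ (Set.Ici 1) := by
    refine monotoneOn_of_deriv_nonneg (convex_Ici 1) hφc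
      (fun x hx => ?_) fun x hx => ?_
    · exact (hφd x (hpos (interior_subset hx))).differentiableAt.differentiableWithinAt
    · rw [(hφd x (hpos (interior_subset hx))).deriv]
      exact he0 x (hpos (interior_subset hx))
  have hψd : ∀ x, 0 < x → HasDerivAt (fun x => φ x + 5 / 24 * (x * √x)⁻¹)
      (e x + -(5 / (16 * (x ^ 2 * √x)))) x := fun x hx => (hφd x hx).add (hasDerivAt_inv_mul_sqrt hx)
  have hψ : AntitoneOn (fun x => φ x + 5 / 24 * (x * √x)⁻¹) (Set.Ici 1) := by
    refine antitoneOn_of_deriv_nonpos (convex_Ici 1) (fun x hx => ?_)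
      (fun x hx => ?_) fun x hx => ?_
    · exact (hψd x (hpos hx)).continuousAt.continuousWithinAt
    · exact (hψd x (hpos (interior_subset hx))).differentiableAt.differentiableWithinAt
    · have hx := hpos (interior_subset hx)
      rw [(hψd x hx).deriv]
      linarith [hele x hx]
  have hle : ∀ x, 1 ≤ x → ∀ t, 1 ≤ t → φ t ≤ φ x + 5 / 24 * (x * √x)⁻¹ := by
    intro x hx t ht
    rcases le_total x t with h | h
    · have := hψ hx ht h
      have h0 : 0 ≤ 5 / 24 * (t * √t)⁻¹ := by have := hpos ht; positivity
      simp only at this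
      linarith
    · have := hφm ht hx h
      have h0 : 0 ≤ 5 / 24 * (x * √x)⁻¹ := by have := hpos hx; positivity
      linarith
  set L := sSup (φ '' Set.Ici 1)
  have hLUB : IsLUB (φ '' Set.Ici 1) L := by
    refine isLUB_csSup ⟨_, 1, Set.self_mem_Ici, rfl⟩ ⟨φ 1 + 5 / 24 * (1 * √1)⁻¹, ?_⟩
    rintro _ ⟨t, ht, rfl⟩
    exact hle 1 le_rfl t ht
  have hbounds : ∀ x, 1 ≤ x → φ x ≤ L ∧ L ≤ φ x + 5 / 24 * (x * √x)⁻¹ := by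
    intro x hx
    refine ⟨hLUB.1 ⟨x, hx, rfl⟩, hLUB.2 ?_⟩
    rintro _ ⟨t, ht, rfl⟩
    exact hle x hx t ht
  have hlim : Filter.Tendsto φ Filter.atTop (nhds L) := by
    have hz : Filter.Tendsto (fun x : ℝ => 5 / 24 * (x * √x)⁻¹) Filter.atTop (nhds 0) := by
      have := (Filter.tendsto_id.atTop_mul_atTop₀ Real.tendsto_sqrt_atTop).inv_tendsto_atTop
      simpa using this.const_mul (5 / 24 : ℝ)
    have hz' : Filter.Tendsto (fun x : ℝ => L - 5 / 24 * (x * √x)⁻¹) Filter.atTop (nhds L) := by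
      simpa using hz.const_sub L
    refine tendsto_of_tendsto_of_tendsto_of_le_of_le' hz' tendsto_const_nhds ?_ ?_
    · filter_upwards [Filter.eventually_ge_atTop 1] with x hx
      linarith [(hbounds x hx).2]
    · filter_upwards [Filter.eventually_ge_atTop 1] with x hx
      exact (hbounds x hx).1
  refine ⟨φ, L, hφc, hφm, ?_, ?_, hlim, hbounds, ?_⟩
  · have := Real.arctan_lt_pi_div_two (P 1 / Q 1)
    rw [hφ1]; linarith
  · have := Real.neg_pi_div_two_lt_arctan (P 1 / Q 1)
    rw [hφ1]; linarith
  set θ : ℝ → ℝ := fun x => 2 / 3 * (x * √x) + φ x with hθ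
  have hθd : ∀ x, 0 < x → HasDerivAt θ (√x + e x) x := fun x hx =>
    (hasDerivAt_two_thirds_mul_sqrt hx).add (hφd x hx)
  set N : ℝ → ℝ := fun x => P x * Real.sin (θ x) - Q x * Real.cos (θ x) with hN
  have hNd : ∀ x, 0 < x → HasDerivAt (fun x => N x ^ 2 / R x) 0 x := by
    intro x hx
    have hRx := hRpos x hx
    have hs : 0 < √x := Real.sqrt_pos.2 hx
    have hNx := ((hPd x hx).mul (hθd x hx).sin).sub ((hQd x hx).mul (hθd x hx).cos)
    have hRd := ((hPd x hx).pow 2).add ((hQd x hx).pow 2)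
    refine ((hNx.pow 2).div hRd hRx.ne').congr_deriv ?_
    have hθ' : √x + e x = (P x * (√x * y' x + y x / (2 * √x))
        - Q x * (-x * y x + y' x / (4 * x) - y x / (4 * x ^ 2))) / R x := by
      rw [eq_div_iff hRx.ne']
      have : e x * R x = 5 * y x ^ 2 / (16 * (x * √x)) := by
        simp only [he]; field_simp
      rw [add_mul, this]
      have hsq : √x ^ 2 = x := Real.sq_sqrt hx.le
      simp only [hR, hP, hQ]
      obtain ⟨s, hs'⟩ : ∃ s, s = √x := ⟨_, rfl⟩
      rw [← hs'] at hsq hs ⊢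
      rw [← hsq]
      field_simp
      ring
    generalize -x * y x + y' x / (4 * x) - y x / (4 * x ^ 2) = p at *
    generalize √x * y' x + y x / (2 * √x) = q at *
    rw [hθ']
    have hRe : R x = P x ^ 2 + Q x ^ 2 := rfl
    rw [div_eq_zero_iff]
    left
    simp only [Pi.mul_apply, Pi.sub_apply, Pi.add_apply, Pi.pow_apply]
    rw [hRe] at hRx ⊢
    field_simp
    ring
  have hN1 : N 1 = 0 := by
    have hQ1 : Q 1 ≠ 0 := by simp [hQ, h1.ne']
    have hθ1 : θ 1 = π / 2 - a := by simp [hθ, hφ1]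
    have ht : Real.tan a = P 1 / Q 1 := Real.tan_arctan _
    rw [Real.tan_eq_sin_div_cos, div_eq_div_iff (Real.cos_arctan_pos _).ne' hQ1] at ht
    simp only [hN, hθ1, Real.sin_pi_div_two_sub, Real.cos_pi_div_two_sub]
    linarith
  have hN0 : ∀ x, 1 ≤ x → N x = 0 := by
    intro x hx
    have hconst := (convex_Ioi (0 : ℝ)).is_const_of_fderivWithin_eq_zero (𝕜 := ℝ)
      (f := fun x => N x ^ 2 / R x)
      (fun t ht => (hNd t ht).differentiableAt.differentiableWithinAt) (fun t ht => by
        rw [fderivWithin_of_isOpen isOpen_Ioi ht]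
        ext; simp [(hNd t ht).deriv]) (Set.mem_Ioi.2 (hpos hx)) (Set.mem_Ioi.2 one_pos)
    simp only [hN1] at hconst
    have := (hRpos x (hpos hx)).ne'
    simpa [this] using hconst
  intro x hx
  have hx0 := hpos hx
  have hs : 0 < √x := Real.sqrt_pos.2 hx0
  have hNx := hN0 x hx
  have hRx := hRpos x hx0
  simp only [hN] at hNx
  simp only [hR] at hRx
  change y x = 0 ↔ Real.sin (θ x) = 0
  have hcs := Real.sin_sq_add_cos_sq (θ x)
  constructor
  · intro h
    have hQ0 : Q x = 0 := by simp [hQ, h]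
    have hP0 : P x ≠ 0 := by rintro hP0; simp [hQ0, hP0] at hRx
    simpa [hQ0, hP0] using hNx
  · intro h
    have hco : Real.cos (θ x) ≠ 0 := by rintro hc0; simp [h, hc0] at hcs
    have hQ0 : Q x = 0 := by simpa [h, hco] using hNx
    simpa [hQ, hs.ne'] using hQ0

/-- The moments `∫₀^∞ tⁿ exp(-t³/3 + z t) dt`; for `n = 0` this is `π` times the Scorer
function `Hi`. -/
def scorerMoment (n : ℕ) (z : ℂ) : ℂ :=
  ∫ t in Set.Ioi (0 : ℝ), (t : ℂ) ^ n * Complex.exp (-(t : ℂ) ^ 3 / 3 + z * t)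

lemma exp_neg_cube_add_mul_le (a : ℝ) {t : ℝ} (ht : 0 ≤ t) :
    Real.exp (-t ^ 3 / 3 + a * t) ≤ Real.exp (4 / 3 + (a + 1) ^ 2 / 4) * Real.exp (-t) := by
  rw [← Real.exp_add, Real.exp_le_exp]
  nlinarith [mul_nonneg (sq_nonneg (t - 2)) (by linarith : 0 ≤ t + 1),
    sq_nonneg (t - (a + 1) / 2)]

lemma integrableOn_pow_mul_exp_neg_cube (n : ℕ) (a : ℝ) :
    IntegrableOn (fun t : ℝ => t ^ n * Real.exp (-t ^ 3 / 3 + a * t)) (Set.Ioi 0) := by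
  have h := (Real.GammaIntegral_convergent (s := n + 1) (by positivity)).const_mul
    (Real.exp (4 / 3 + (a + 1) ^ 2 / 4))
  refine h.mono' (by fun_prop) ?_
  filter_upwards [ae_restrict_mem measurableSet_Ioi] with t ht
  have ht : 0 < t := ht
  rw [Real.norm_of_nonneg (by positivity)]
  simp only [add_sub_cancel_right, Real.rpow_natCast]
  rw [mul_comm, ← mul_assoc]
  gcongr
  exact exp_neg_cube_add_mul_le a ht.le

lemma norm_scorer_integrand (n : ℕ) (z : ℂ) {t : ℝ} (ht : 0 ≤ t) :
    ‖(t : ℂ) ^ n * Complex.exp (-(t : ℂ) ^ 3 / 3 + z * t)‖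
      = t ^ n * Real.exp (-t ^ 3 / 3 + z.re * t) := by
  rw [norm_mul, norm_pow, Complex.norm_real, Real.norm_of_nonneg ht, Complex.norm_exp]
  congr 2
  rw [show (-(t : ℂ) ^ 3 / 3) = ((-t ^ 3 / 3 : ℝ) : ℂ) by push_cast; ring]
  rw [Complex.add_re, Complex.ofReal_re, Complex.re_mul_ofReal]

lemma integrableOn_scorer_integrand (n : ℕ) (z : ℂ) :
    IntegrableOn (fun t : ℝ => (t : ℂ) ^ n * Complex.exp (-(t : ℂ) ^ 3 / 3 + z * t))
      (Set.Ioi 0) := by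
  refine (integrableOn_pow_mul_exp_neg_cube n z.re).mono'
    (by fun_prop) ?_
  filter_upwards [ae_restrict_mem measurableSet_Ioi] with t ht
  exact (norm_scorer_integrand n z (Set.mem_Ioi.1 ht).le).le

lemma hasDerivAt_scorerMoment (n : ℕ) (z : ℂ) :
    HasDerivAt (scorerMoment n) (scorerMoment (n + 1) z) z := by
  refine (hasDerivAt_integral_of_dominated_loc_of_deriv_le
    (F' := fun z (t : ℝ) => (t : ℂ) ^ (n + 1) * Complex.exp (-(t : ℂ) ^ 3 / 3 + z * t))
    (Metric.ball_mem_nhds z one_pos) (Filter.Eventually.of_forall fun w =>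
      (integrableOn_scorer_integrand n w).aestronglyMeasurable)
    (integrableOn_scorer_integrand n z)
    (integrableOn_scorer_integrand (n + 1) z).aestronglyMeasurable ?_
    (integrableOn_pow_mul_exp_neg_cube (n + 1) (z.re + 1)) ?_).2
  · filter_upwards [ae_restrict_mem measurableSet_Ioi] with t ht w hw
    have ht : 0 < t := ht
    rw [norm_scorer_integrand _ _ ht.le]
    have h1 : w.re - z.re ≤ 1 := by
      have h2 := Complex.abs_re_le_norm (w - z)
      rw [Metric.mem_ball, dist_eq_norm] at hw
      rw [Complex.sub_re] at h2
      linarith [le_abs_self (w.re - z.re)]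
    gcongr
    linarith
  · refine Filter.Eventually.of_forall fun t w _ => ?_
    have h := (((hasDerivAt_id w).mul_const (t : ℂ)).const_add (-(t : ℂ) ^ 3 / 3)).cexp.const_mul
      ((t : ℂ) ^ n)
    refine h.congr_deriv ?_
    simp only [id]
    ring

lemma scorerMoment_two (z : ℂ) : scorerMoment 2 z = z * scorerMoment 0 z + 1 := by
  have hd : ∀ t : ℝ, HasDerivAt (fun t : ℝ => -Complex.exp (-(t : ℂ) ^ 3 / 3 + z * t))
      ((t : ℂ) ^ 2 * Complex.exp (-(t : ℂ) ^ 3 / 3 + z * t)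
        - z * ((t : ℂ) ^ 0 * Complex.exp (-(t : ℂ) ^ 3 / 3 + z * t))) t := by
    intro t
    have h : HasDerivAt (fun w : ℂ => -Complex.exp (-w ^ 3 / 3 + z * w))
      (-(Complex.exp (-(t : ℂ) ^ 3 / 3 + z * t) * (-(t : ℂ) ^ 2 + z))) (t : ℂ) := by
      have h3 := ((hasDerivAt_pow 3 (t : ℂ)).neg.div_const 3).add
        ((hasDerivAt_id (t : ℂ)).const_mul z)
      refine h3.cexp.neg.congr_deriv ?_
      simp only [Pi.add_apply, id]
      push_cast
      simp only [Pi.neg_apply]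
      ring
    refine h.comp_ofReal.congr_deriv ?_
    ring
  have h2 := integrableOn_scorer_integrand 2 z
  have h0 := (integrableOn_scorer_integrand 0 z).const_mul z
  have hlim : Filter.Tendsto (fun t : ℝ => -Complex.exp (-(t : ℂ) ^ 3 / 3 + z * t))
      Filter.atTop (nhds 0) := by
    rw [tendsto_zero_iff_norm_tendsto_zero]
    have hb : Filter.Tendsto (fun t : ℝ => Real.exp (4 / 3 + (z.re + 1) ^ 2 / 4) * Real.exp (-t))
        Filter.atTop (nhds 0) := by
      simpa using Real.tendsto_exp_neg_atTop_nhds_zero.const_mul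
        (Real.exp (4 / 3 + (z.re + 1) ^ 2 / 4))
    refine squeeze_zero' (Filter.Eventually.of_forall fun _ => norm_nonneg _) ?_ hb
    filter_upwards [Filter.eventually_ge_atTop 0] with t ht
    have := norm_scorer_integrand 0 z ht
    simp only [pow_zero, one_mul] at this
    rw [norm_neg, this]
    exact exp_neg_cube_add_mul_le z.re ht
  have key := integral_Ioi_of_hasDerivAt_of_tendsto (hd 0).continuousAt.continuousWithinAt
    (fun t _ => hd t) (h2.sub h0) hlim
  rw [integral_sub h2 h0, integral_const_mul] at key
  simp only [scorerMoment]
  rw [← sub_eq_iff_eq_add', key]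
  simp

/-- The rectangular contour shift for the Scorer integral. -/
lemma scorerMoment_zero_eq_shift (z : ℂ) {b : ℝ} (hb : 0 ≤ b) :
    scorerMoment 0 z =
      Complex.I * (∫ v in (0 : ℝ)..b,
        Complex.exp (-(v * Complex.I) ^ 3 / 3 + z * (v * Complex.I))) +
      ∫ s in Set.Ioi (0 : ℝ),
        Complex.exp (-(s + b * Complex.I) ^ 3 / 3 + z * (s + b * Complex.I)) := by
  set F : ℂ → ℂ := fun t => Complex.exp (-t ^ 3 / 3 + z * t) with hF
  have hFd : Differentiable ℂ F := by fun_prop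
  have hnorm : ∀ s : ℝ, 0 ≤ s → ∀ v : ℝ, 0 ≤ v → v ≤ b →
      ‖F (s + v * Complex.I)‖ ≤ Real.exp (b * ‖z‖) *
        Real.exp (-s ^ 3 / 3 + (b ^ 2 + z.re) * s) := by
    intro s hs v hv hvb
    rw [hF, Complex.norm_exp, ← Real.exp_add]
    gcongr
    have : (-((s : ℂ) + v * Complex.I) ^ 3 / 3 + z * (s + v * Complex.I)).re
        = -s ^ 3 / 3 + (v ^ 2 + z.re) * s - v * z.im := by
      rw [show -((s : ℂ) + v * Complex.I) ^ 3 / 3 + z * (s + v * Complex.I)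
        = ((-s ^ 3 / 3 + v ^ 2 * s : ℝ) : ℂ) + ((-s ^ 2 * v + v ^ 3 / 3 : ℝ) : ℂ) * Complex.I
          + z * (s + v * Complex.I) by
          push_cast
          linear_combination (-(s : ℂ) * v ^ 2 - v ^ 3 / 3 * Complex.I) * Complex.I_sq]
      rw [Complex.add_re, Complex.add_re, Complex.ofReal_re, Complex.re_ofReal_mul]
      simp
      ring
    rw [this]
    have h1 : -(v * z.im) ≤ b * ‖z‖ := by
      have := Complex.abs_im_le_norm z
      have := neg_abs_le z.im
      nlinarith [norm_nonneg z, mul_le_mul_of_nonneg_right hvb (norm_nonneg z)]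
    have h2 : v ^ 2 * s ≤ b ^ 2 * s := by gcongr
    linarith
  have hrect : ∀ T : ℝ, (∫ x in (0 : ℝ)..T, F x) = Complex.I * (∫ v in (0 : ℝ)..b,
      F (v * Complex.I)) + (∫ s in (0 : ℝ)..T, F (s + b * Complex.I))
        - Complex.I * (∫ v in (0 : ℝ)..b, F (T + v * Complex.I)) := by
    intro T
    have := Complex.integral_boundary_rect_eq_zero_of_differentiableOn F 0 (T + b * Complex.I)
      hFd.differentiableOn
    simp at this
    linear_combination this
  have hint : IntegrableOn (fun s : ℝ => F (s + b * Complex.I)) (Set.Ioi 0) := by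
    have h := (integrableOn_pow_mul_exp_neg_cube 0 (b ^ 2 + z.re)).const_mul (Real.exp (b * ‖z‖))
    refine h.mono' (by fun_prop) ?_
    filter_upwards [ae_restrict_mem measurableSet_Ioi] with s hs
    simpa using hnorm s (Set.mem_Ioi.1 hs).le b hb le_rfl
  have hint0 : IntegrableOn (fun s : ℝ => F s) (Set.Ioi 0) := by
    simpa using integrableOn_scorer_integrand 0 z
  have hside : Filter.Tendsto (fun T : ℝ => ∫ v in (0 : ℝ)..b, F (T + v * Complex.I))
      Filter.atTop (nhds 0) := by
    set a := b ^ 2 + z.re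
    have hbd : Filter.Tendsto (fun T : ℝ => Real.exp (b * ‖z‖) *
        (Real.exp (4 / 3 + (a + 1) ^ 2 / 4) * Real.exp (-T)) * |b - 0|)
        Filter.atTop (nhds 0) := by
      simpa using ((Real.tendsto_exp_neg_atTop_nhds_zero.const_mul
        (Real.exp (4 / 3 + (a + 1) ^ 2 / 4))).const_mul (Real.exp (b * ‖z‖))).mul_const |b - 0|
    refine squeeze_zero_norm' ?_ hbd
    filter_upwards [Filter.eventually_ge_atTop 0] with T hT
    refine intervalIntegral.norm_integral_le_of_norm_le_const fun v hv => ?_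
    rw [Set.uIoc_of_le hb] at hv
    refine (hnorm T hT v hv.1.le hv.2).trans ?_
    gcongr
    exact exp_neg_cube_add_mul_le a hT
  have l1 := intervalIntegral_tendsto_integral_Ioi 0 hint0 Filter.tendsto_id
  have l2 := ((intervalIntegral_tendsto_integral_Ioi 0 hint Filter.tendsto_id).const_add
    (Complex.I * ∫ v in (0 : ℝ)..b, F (v * Complex.I))).sub (hside.const_mul Complex.I)
  have := tendsto_nhds_unique l1 (l2.congr fun T => (hrect T).symm)
  simpa [scorerMoment] using this

lemma integrableOn_exp_neg_mul {m : ℝ} (hm : 0 < m) :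
    IntegrableOn (fun t : ℝ => Real.exp (-m * t)) (Set.Ioi 0) :=
  integrableOn_exp_mul_Ioi (neg_lt_zero.2 hm) 0

lemma integral_exp_neg_mul {m : ℝ} (hm : 0 < m) :
    ∫ t in Set.Ioi (0 : ℝ), Real.exp (-m * t) = 1 / m := by
  rw [integral_exp_mul_Ioi (neg_lt_zero.2 hm)]
  simp

lemma norm_scorerMoment_neg_le {r : ℝ} (hr : 0 < r) : ‖scorerMoment 0 (-(r : ℂ))‖ ≤ 1 / r := by
  rw [← integral_exp_neg_mul hr]
  refine norm_integral_le_of_norm_le (integrableOn_exp_neg_mul hr) ?_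
  filter_upwards [ae_restrict_mem measurableSet_Ioi] with t ht
  have ht : 0 < t := ht
  rw [norm_scorer_integrand 0 _ ht.le]
  simp only [pow_zero, one_mul, Complex.neg_re, Complex.ofReal_re]
  gcongr
  have : 0 < t ^ 3 := by positivity
  linarith

/-- `e^{iπ/6}`. -/
def sixthRoot : ℂ := ((√3 / 2 : ℝ) : ℂ) + ((1 / 2 : ℝ) : ℂ) * Complex.I

/-- `e^{iπ/3}`. -/
def thirdRoot : ℂ := ((1 / 2 : ℝ) : ℂ) + ((√3 / 2 : ℝ) : ℂ) * Complex.I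

lemma ofReal_sqrt_three_sq : ((√3 : ℝ) : ℂ) ^ 2 = 3 := by
  rw [← Complex.ofReal_pow, Real.sq_sqrt (by norm_num)]; norm_num

lemma sixthRoot_sq : sixthRoot ^ 2 = thirdRoot := by
  simp only [sixthRoot, thirdRoot]
  push_cast
  linear_combination (1 / 4 : ℂ) * ofReal_sqrt_three_sq + (1 / 4 : ℂ) * Complex.I_sq

lemma sixthRoot_mul_thirdRoot : sixthRoot * thirdRoot = Complex.I := by
  simp only [sixthRoot, thirdRoot]
  push_cast
  linear_combination (Complex.I / 4 : ℂ) * ofReal_sqrt_three_sq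
    + ((√3 : ℝ) / 4 : ℂ) * Complex.I_sq

lemma exp_pi_div_three : Complex.exp ((π / 3 : ℝ) * Complex.I) = thirdRoot := by
  rw [Complex.exp_mul_I, ← Complex.ofReal_cos, ← Complex.ofReal_sin, Real.cos_pi_div_three,
    Real.sin_pi_div_three, thirdRoot]

lemma exp_pi_div_six : Complex.exp ((π / 6 : ℝ) * Complex.I) = sixthRoot := by
  rw [Complex.exp_mul_I, ← Complex.ofReal_cos, ← Complex.ofReal_sin, Real.cos_pi_div_six,
    Real.sin_pi_div_six, sixthRoot]

lemma sixthRoot_re : sixthRoot.re = √3 / 2 := by simp [sixthRoot]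

lemma sqrt_pi_div_sixthRoot :
    ((π : ℂ) / sixthRoot) ^ (1 / 2 : ℂ) = √π * Complex.exp ((-(π / 12) : ℝ) * Complex.I) := by
  have hpi := Real.pi_pos
  have h : (π : ℂ) / sixthRoot
      = Complex.exp (((Real.log π : ℝ) : ℂ) + ((-(π / 6) : ℝ) : ℂ) * Complex.I) := by
    rw [← exp_pi_div_six, Complex.exp_add, ← Complex.ofReal_exp, Real.exp_log hpi,
      div_eq_mul_inv, ← Complex.exp_neg]
    congr 2
    push_cast; ring
  have hs : ((√π : ℝ) : ℂ) = Complex.exp ((Real.log π / 2 : ℝ) : ℂ) := by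
    rw [← Complex.ofReal_exp, Real.exp_half, Real.exp_log hpi]
  rw [h, Complex.cpow_def_of_ne_zero (Complex.exp_ne_zero _), Complex.log_exp, hs,
    ← Complex.exp_add]
  · congr 1
    push_cast; ring
  · simp only [Complex.add_im, Complex.ofReal_im, Complex.im_ofReal_mul, Complex.I_im]
    linarith
  · simp only [Complex.add_im, Complex.ofReal_im, Complex.im_ofReal_mul, Complex.I_im]
    linarith

lemma three_halves_le_sqrt_three : (3 / 2 : ℝ) ≤ √3 :=
  Real.le_sqrt_of_sq_le (by norm_num)

/-- The exponent of the Scorer integral, recentred at its saddle point. -/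
lemma scorer_exponent_saddle {l : ℝ} (hl : l ≠ 0) (x : ℝ) :
    -(((√3 / 2 * l ^ 2 + x / l : ℝ) : ℂ) + ((l ^ 2 / 2 : ℝ) : ℂ) * Complex.I) ^ 3 / 3
      + ((l ^ 4 : ℝ) : ℂ) * thirdRoot *
        (((√3 / 2 * l ^ 2 + x / l : ℝ) : ℂ) + ((l ^ 2 / 2 : ℝ) : ℂ) * Complex.I)
      = ((2 / 3 * l ^ 6 : ℝ) : ℂ) * Complex.I
        + (-sixthRoot * (x : ℂ) ^ 2 - ((x ^ 3 / (3 * l ^ 3) : ℝ) : ℂ)) := by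
  have hl' : (l : ℂ) ≠ 0 := by exact_mod_cast hl
  have h : ((√3 / 2 * l ^ 2 + x / l : ℝ) : ℂ) + ((l ^ 2 / 2 : ℝ) : ℂ) * Complex.I
      = (l : ℂ) ^ 2 * sixthRoot + x / l := by
    simp only [sixthRoot]; push_cast; ring
  rw [h, ← sixthRoot_mul_thirdRoot, ← sixthRoot_sq]
  push_cast
  field_simp
  ring

/-- Leading asymptotics of the Scorer integral on the ray `arg z = π/3`. -/
lemma tendsto_scorerMoment_ray :
    Filter.Tendsto (fun l : ℝ => (l : ℂ) * Complex.exp (((-(2 / 3 * l ^ 6) : ℝ) : ℂ) * Complex.I) *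
        scorerMoment 0 (((l ^ 4 : ℝ) : ℂ) * thirdRoot)) Filter.atTop
      (nhds (√π * Complex.exp ((-(π / 12) : ℝ) * Complex.I))) := by
  set E : ℝ → ℂ := fun l => Complex.exp (((-(2 / 3 * l ^ 6) : ℝ) : ℂ) * Complex.I) with hE
  have hEn : ∀ l, ‖E l‖ = 1 := fun l => Complex.norm_exp_ofReal_mul_I _
  set V : ℝ → ℂ := fun l => ∫ v in (0 : ℝ)..(l ^ 2 / 2), Complex.exp (-(v * Complex.I) ^ 3 / 3
    + ((l ^ 4 : ℝ) : ℂ) * thirdRoot * (v * Complex.I))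
  set H : ℝ → ℝ → ℂ := fun l => (Set.Ioi (-(√3 / 2 * l ^ 3))).indicator fun x =>
    Complex.exp (-sixthRoot * (x : ℂ) ^ 2 - ((x ^ 3 / (3 * l ^ 3) : ℝ) : ℂ)) with hH
  have hHin : ∀ l x, -(√3 / 2 * l ^ 3) < x → H l x =
      Complex.exp (-sixthRoot * (x : ℂ) ^ 2 - ((x ^ 3 / (3 * l ^ 3) : ℝ) : ℂ)) :=
    fun l x hx => Set.indicator_of_mem (Set.mem_Ioi.2 hx) _
  have hHout : ∀ l x, ¬ -(√3 / 2 * l ^ 3) < x → H l x = 0 :=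
    fun l x hx => Set.indicator_of_notMem (fun h => hx (Set.mem_Ioi.1 h)) _
  have hs3 := three_halves_le_sqrt_three
  have hvert : ∀ l : ℝ, 0 < l → ‖V l‖ ≤ 1 / (√3 / 2 * l ^ 4) := by
    intro l hl
    have hm : 0 < √3 / 2 * l ^ 4 := by positivity
    have hi := integrableOn_exp_neg_mul hm
    have hb : (0 : ℝ) ≤ l ^ 2 / 2 := by positivity
    have hi' : IntervalIntegrable (fun t : ℝ => Real.exp (-(√3 / 2 * l ^ 4) * t)) volume 0
        (l ^ 2 / 2) := by
      apply Continuous.intervalIntegrable; fun_prop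
    refine (intervalIntegral.norm_integral_le_of_norm_le hb
      (Filter.Eventually.of_forall fun v _ => ?_) hi').trans ?_
    · rw [Complex.norm_exp]
      gcongr
      rw [show -((v : ℂ) * Complex.I) ^ 3 / 3 + ((l ^ 4 : ℝ) : ℂ) * thirdRoot * (v * Complex.I)
        = ((-(√3 / 2 * l ^ 4) * v : ℝ) : ℂ) + ((v ^ 3 / 3 + l ^ 4 * v / 2 : ℝ) : ℂ) * Complex.I by
        simp only [thirdRoot]
        push_cast
        linear_combination (-(v : ℂ) ^ 3 / 3 * Complex.I + l ^ 4 * v * √3 / 2) * Complex.I_sq]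
      rw [Complex.add_re, Complex.ofReal_re, Complex.re_ofReal_mul, Complex.I_re]
      simp
    · rw [← integral_exp_neg_mul hm, intervalIntegral.integral_of_le hb]
      exact setIntegral_mono_set hi (Filter.Eventually.of_forall fun t => (Real.exp_pos _).le)
        Set.Ioc_subset_Ioi_self.eventuallyLE
  have hsplit : ∀ l : ℝ, 0 < l → (l : ℂ) * E l * scorerMoment 0 (((l ^ 4 : ℝ) : ℂ) * thirdRoot)
      = (l : ℂ) * E l * (Complex.I * V l) + ∫ x, H l x := by
    intro l hl
    rw [scorerMoment_zero_eq_shift _ (by positivity : (0 : ℝ) ≤ l ^ 2 / 2), mul_add]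
    congr 1
    rw [← integral_indicator measurableSet_Ioi]
    set g : ℝ → ℂ := (Set.Ioi (0 : ℝ)).indicator fun s : ℝ => Complex.exp
      (-((s : ℂ) + ((l ^ 2 / 2 : ℝ) : ℂ) * Complex.I) ^ 3 / 3 + ((l ^ 4 : ℝ) : ℂ) * thirdRoot *
        ((s : ℂ) + ((l ^ 2 / 2 : ℝ) : ℂ) * Complex.I)) with hg
    have hsub : (l : ℂ) * ∫ s, g s = ∫ x, g (√3 / 2 * l ^ 2 + x / l) := by
      have h1 := Measure.integral_comp_div (fun s => g (√3 / 2 * l ^ 2 + s)) l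
      rw [h1, integral_add_left_eq_self, abs_of_pos hl, Complex.real_smul]
    rw [mul_right_comm, hsub, mul_comm, ← integral_const_mul]
    congr 1
    ext x
    have hiff : 0 < √3 / 2 * l ^ 2 + x / l ↔ -(√3 / 2 * l ^ 3) < x := by
      rw [show √3 / 2 * l ^ 2 + x / l = (√3 / 2 * l ^ 3 + x) / l by field_simp,
        div_pos_iff_of_pos_right hl, neg_lt_iff_pos_add']
    by_cases hx : -(√3 / 2 * l ^ 3) < x
    · rw [hg, hHin l x hx, Set.indicator_of_mem (Set.mem_Ioi.2 (hiff.2 hx)),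
        scorer_exponent_saddle hl.ne', hE,
        ← Complex.exp_add]
      congr 1
      push_cast; ring
    · rw [hg, hHout l x hx, Set.indicator_of_notMem fun h => hx (hiff.1 (Set.mem_Ioi.1 h)),
        mul_zero]
  have hA : Filter.Tendsto (fun l : ℝ => (l : ℂ) * E l * (Complex.I * V l)) Filter.atTop
      (nhds 0) := by
    refine squeeze_zero_norm' ?_ tendsto_inv_atTop_zero
    filter_upwards [Filter.eventually_ge_atTop 2] with l hl
    have hl0 : 0 < l := by linarith
    rw [norm_mul, norm_mul, norm_mul, hEn, Complex.norm_I, Complex.norm_real,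
      Real.norm_of_nonneg hl0.le, mul_one, one_mul]
    refine (mul_le_mul_of_nonneg_left (hvert l hl0) hl0.le).trans ?_
    rw [inv_eq_one_div, mul_one_div, div_le_div_iff₀ (by positivity) hl0]
    have : (2 : ℝ) ^ 2 ≤ l ^ 2 := by gcongr
    nlinarith [mul_le_mul hs3 this (by norm_num) (by positivity), sq_nonneg l]
  have hB : Filter.Tendsto (fun l => ∫ x, H l x) Filter.atTop
      (nhds (∫ x : ℝ, Complex.exp (-sixthRoot * (x : ℂ) ^ 2))) := by
    refine tendsto_integral_filter_of_dominated_convergence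
      (fun x => Real.exp (-(1 / 2) * x ^ 2)) ?_ ?_ (integrable_exp_neg_mul_sq (by norm_num)) ?_
    · refine Filter.Eventually.of_forall fun l => ?_
      refine AEStronglyMeasurable.indicator ?_ measurableSet_Ioi
      refine Continuous.aestronglyMeasurable ?_
      fun_prop
    · filter_upwards [Filter.eventually_gt_atTop 0] with l hl
      refine Filter.Eventually.of_forall fun x => ?_
      by_cases hx : -(√3 / 2 * l ^ 3) < x
      · rw [hHin l x hx, Complex.norm_exp]
        gcongr
        rw [Complex.sub_re, Complex.ofReal_re, ← Complex.ofReal_pow, Complex.re_mul_ofReal,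
          Complex.neg_re, sixthRoot_re]
        have h1 : -(√3 / 6 * x ^ 2) ≤ x ^ 3 / (3 * l ^ 3) := by
          rw [le_div_iff₀ (by positivity)]
          nlinarith [mul_le_mul_of_nonneg_left hx.le (sq_nonneg x)]
        nlinarith [mul_le_mul_of_nonneg_right hs3 (sq_nonneg x)]
      · rw [hHout l x hx, norm_zero]
        positivity
    · refine Filter.Eventually.of_forall fun x => ?_
      have hcube : Filter.Tendsto (fun l : ℝ => l ^ 3) Filter.atTop Filter.atTop :=
        Filter.tendsto_pow_atTop (by norm_num)
      have hz : Filter.Tendsto (fun l : ℝ => x ^ 3 / (3 * l ^ 3)) Filter.atTop (nhds 0) :=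
        Filter.Tendsto.const_div_atTop (hcube.const_mul_atTop (by norm_num)) _
      have hlim : Filter.Tendsto (fun l : ℝ => Complex.exp (-sixthRoot * (x : ℂ) ^ 2
          - ((x ^ 3 / (3 * l ^ 3) : ℝ) : ℂ))) Filter.atTop
          (nhds (Complex.exp (-sixthRoot * (x : ℂ) ^ 2))) := by
        have := ((Complex.continuous_ofReal.tendsto 0).comp hz).const_sub
          (-sixthRoot * (x : ℂ) ^ 2)
        rw [Complex.ofReal_zero, sub_zero] at this
        exact this.cexp
      refine hlim.congr' ?_
      have hev := (hcube.const_mul_atTop (by positivity : 0 < √3 / 2)).eventually_gt_atTop (-x)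
      filter_upwards [hev] with l hl
      rw [hHin l x (by linarith)]
  rw [integral_gaussian_complex (by rw [sixthRoot_re]; positivity), sqrt_pi_div_sixthRoot] at hB
  have := hA.add hB
  rw [zero_add] at this
  refine this.congr' ?_
  filter_upwards [Filter.eventually_gt_atTop 0] with l hl
  exact (hsplit l hl).symm

/-- The zeros of a solution of `y'' = -x y` with `y(0) > 0`, `y'(0) = 0` are located, with the
correct index, by its phase. -/
lemma exists_phase_at_zeros {y y' : ℝ → ℝ} (hy : ∀ x, HasDerivAt y (y' x) x)
    (hy' : ∀ x, HasDerivAt y' (-x * y x) x) (hne : ∀ x, y x = 0 → y' x ≠ 0)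
    (h0 : 0 < y 0) (h0' : y' 0 = 0) {β : ℕ → ℝ} (hmono : StrictMono β)
    (hrange : Set.range β = {r | 0 < r ∧ y r = 0}) :
    ∃ φ : ℝ → ℝ, ∃ L : ℝ, Filter.Tendsto φ Filter.atTop (nhds L) ∧ -(2 / 3) < L ∧
      L < π - 11 / 24 ∧ ∀ k, 1 ≤ β k ∧ 2 / 3 * (β k * √(β k)) = (k + 1) * π - φ (β k) ∧
        φ (β k) ≤ L ∧ L ≤ φ (β k) + 5 / 24 * (β k * √(β k))⁻¹ := by
  have hpos := fun x hx => pos_on_unit_interval hy hy' h0 h0' (x := x) hx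
  obtain ⟨φ, L, hφc, hφm, h1, h2, hlim, hbd, hzero⟩ :=
    exists_phase hy hy' hne (hpos 1 (by norm_num))
  set θ : ℝ → ℝ := fun x => 2 / 3 * (x * √x) + φ x with hθ
  have hθc : ContinuousOn θ (Set.Ici 1) :=
    ContinuousOn.add (by fun_prop) hφc
  have hθm : StrictMonoOn θ (Set.Ici 1) := by
    intro s hs t ht hst
    have hs0 : (0 : ℝ) < s := lt_of_lt_of_le one_pos hs
    have := hφm hs ht hst.le
    have h3 : s * √s < t * √t :=
      mul_lt_mul'' hst (Real.sqrt_lt_sqrt hs0.le hst) hs0.le (Real.sqrt_nonneg s)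
    simp only [hθ]
    linarith
  have hθ1 : θ 1 = 2 / 3 + φ 1 := by simp [hθ]
  have hpi := Real.pi_pos
  have hex : ∀ k : ℕ, ∃ r : ℝ, 1 ≤ r ∧ θ r = (k + 1) * π := by
    intro k
    set A := ((k : ℝ) + 1) * π with hA
    have hA1 : π ≤ A := le_mul_of_one_le_left hpi.le (by simp)
    set X := 2 * (A + 1) with hX
    have hX1 : 1 ≤ X := by linarith
    have hXs : X ≤ X * √X := le_mul_of_one_le_right (by linarith) (Real.one_le_sqrt.2 hX1)
    have hφX := hφm Set.self_mem_Ici hX1 hX1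
    have hAX : A ≤ θ X := by
      simp only [hθ]
      linarith
    obtain ⟨r, hr, hrA⟩ := intermediate_value_Icc hX1 (hθc.mono Set.Icc_subset_Ici_self)
      ⟨by linarith, hAX⟩
    exact ⟨r, hr.1, hrA⟩
  choose ρ hρ1 hρ using hex
  have hρm : StrictMono ρ := by
    intro m n hmn
    rw [← hθm.lt_iff_lt (hρ1 m) (hρ1 n), hρ, hρ]
    have : (m : ℝ) < n := by exact_mod_cast hmn
    gcongr
  have hρr : Set.range ρ = {r | 0 < r ∧ y r = 0} := by
    ext r
    constructor
    · rintro ⟨k, rfl⟩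
      refine ⟨lt_of_lt_of_le one_pos (hρ1 k), (hzero _ (hρ1 k)).2 ?_⟩
      have := hρ k
      simp only [hθ] at this
      rw [this]
      exact_mod_cast Real.sin_nat_mul_pi (k + 1)
    · rintro ⟨hr, hyr⟩
      have hr1 : 1 ≤ r := by
        by_contra h
        exact (hpos r ⟨hr.le, (not_le.1 h).le⟩).ne' hyr
      obtain ⟨n, hn⟩ := Real.sin_eq_zero_iff.1 ((hzero r hr1).1 hyr)
      have hθr : θ 1 ≤ θ r := hθm.monotoneOn Set.self_mem_Ici hr1 hr1
      have hn0 : 0 < n := by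
        have : (0 : ℝ) < n * π := by
          rw [hn]
          change 0 < θ r
          linarith
        exact_mod_cast pos_of_mul_pos_left this hpi.le
      obtain ⟨k, rfl⟩ : ∃ k : ℕ, n = k + 1 := ⟨(n - 1).toNat, by omega⟩
      refine ⟨k, hθm.injOn (hρ1 k) hr1 ?_⟩
      rw [hρ k]
      exact_mod_cast hn
  have hβρ : β = ρ := (hmono.range_inj hρm).1 (hrange.trans hρr.symm)
  subst hβρ
  obtain ⟨hL1, hL2⟩ := hbd 1 le_rfl
  simp at hL2
  refine ⟨φ, L, hlim, by linarith, by linarith, fun k => ⟨hρ1 k, ?_, hbd _ (hρ1 k)⟩⟩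
  have := hρ k
  simp only [hθ] at this
  linarith

/-- The even symmetrisation of the Scorer integral on the ray `arg z = π/3`; it solves
`y'' = -r y` with `y'(0) = 0`. -/
def raySum (r : ℝ) : ℝ :=
  (scorerMoment 0 (r * (-1))).re + 2 * (scorerMoment 0 (r * thirdRoot)).re

/-- The derivative of `raySum`. -/
def raySumDeriv (r : ℝ) : ℝ :=
  (-1 * scorerMoment 1 (r * (-1))).re + 2 * (thirdRoot * scorerMoment 1 (r * thirdRoot)).re

lemma thirdRoot_cube : thirdRoot ^ 3 = -1 := by
  rw [← sixthRoot_sq]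
  have h : sixthRoot ^ 3 = Complex.I := by
    rw [← sixthRoot_mul_thirdRoot, ← sixthRoot_sq]; ring
  linear_combination (sixthRoot ^ 3 + Complex.I) * h + Complex.I_sq

lemma thirdRoot_ne_zero : thirdRoot ≠ 0 := by
  intro h
  have := thirdRoot_cube
  simp [h] at this

lemma HasDerivAt.comp_ofReal_mul {f : ℂ → ℂ} {f' c : ℂ} {r : ℝ}
    (h : HasDerivAt f f' (r * c)) : HasDerivAt (fun r : ℝ => f (r * c)) (c * f') r := by
  have h1 : HasDerivAt (fun w : ℂ => w * c) c (r : ℂ) := by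
    simpa using (hasDerivAt_id (r : ℂ)).mul_const c
  refine ((h.comp (r : ℂ) h1).comp_ofReal).congr_deriv (mul_comm _ _)

lemma HasDerivAt.complex_re {f : ℝ → ℂ} {f' : ℂ} {r : ℝ} (h : HasDerivAt f f' r) :
    HasDerivAt (fun r => (f r).re) f'.re r :=
  Complex.reCLM.hasFDerivAt.comp_hasDerivAt r h

lemma hasDerivAt_raySum (r : ℝ) : HasDerivAt raySum (raySumDeriv r) r :=
  (hasDerivAt_scorerMoment 0 _).comp_ofReal_mul.complex_re.add
    ((hasDerivAt_scorerMoment 0 _).comp_ofReal_mul.complex_re.const_mul 2)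

lemma hasDerivAt_raySumDeriv (r : ℝ) : HasDerivAt raySumDeriv (-r * raySum r) r := by
  refine ((((hasDerivAt_scorerMoment 1 _).comp_ofReal_mul).const_mul (-1)).complex_re.add
    (((hasDerivAt_scorerMoment 1 _).comp_ofReal_mul.const_mul thirdRoot).complex_re.const_mul
      2)).congr_deriv ?_
  rw [scorerMoment_two, scorerMoment_two]
  have h : thirdRoot * (thirdRoot * (r * thirdRoot * scorerMoment 0 (r * thirdRoot) + 1))
      = -((r : ℂ) * scorerMoment 0 (r * thirdRoot)) + thirdRoot ^ 2 := by
    linear_combination ((r : ℂ) * scorerMoment 0 (r * thirdRoot)) * thirdRoot_cube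
  have hsq : (thirdRoot ^ 2).re = -(1 / 2) := by
    have h3 : √3 * √3 = 3 := Real.mul_self_sqrt (by norm_num)
    simp [thirdRoot, sq]
    linear_combination (-1 / 4) * h3
  rw [h, Complex.add_re, hsq, Complex.neg_re, Complex.re_ofReal_mul]
  simp only [raySum]
  have h2 : -1 * (-1 * ((r : ℂ) * (-1) * scorerMoment 0 (r * (-1)) + 1))
    = -((r : ℂ) * scorerMoment 0 (r * (-1))) + 1 := by ring
  rw [h2, Complex.add_re, Complex.neg_re, Complex.re_ofReal_mul, Complex.one_re]
  ring

lemma scorerMoment_at_zero (n : ℕ) : scorerMoment n 0 =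
    ((∫ t in Set.Ioi (0 : ℝ), t ^ n * Real.exp (-t ^ 3 / 3) : ℝ) : ℂ) := by
  rw [scorerMoment, ← integral_complex_ofReal]
  congr 1
  ext t
  push_cast
  simp

lemma raySum_zero_pos : 0 < raySum 0 := by
  simp only [raySum, Complex.ofReal_zero, zero_mul, scorerMoment_at_zero, Complex.ofReal_re]
  have : 0 < ∫ t in Set.Ioi (0 : ℝ), t ^ 0 * Real.exp (-t ^ 3 / 3) := by
    have hi := integrableOn_pow_mul_exp_neg_cube 0 0
    simp only [zero_mul, add_zero, pow_zero, one_mul] at hi ⊢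
    rw [setIntegral_pos_iff_support_of_nonneg_ae
      (Filter.Eventually.of_forall fun t => (Real.exp_pos _).le) hi]
    have : Function.support (fun t : ℝ => Real.exp (-t ^ 3 / 3)) = Set.univ :=
      Function.support_eq_univ fun t => (Real.exp_pos _).ne'
    simp [this]
  linarith

lemma raySumDeriv_zero : raySumDeriv 0 = 0 := by
  simp only [raySumDeriv, Complex.ofReal_zero, zero_mul, scorerMoment_at_zero,
    Complex.re_mul_ofReal]
  simp [thirdRoot]

/-- Along zeros of `raySum` the phase `(2/3) r^(3/2)` tends to `π/2 + π/12` modulo `π`. -/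
lemma tendsto_cos_of_raySum_zero {β : ℕ → ℝ} (hβ : Filter.Tendsto β Filter.atTop Filter.atTop)
    (hz : ∀ k, raySum (β k) = 0) :
    Filter.Tendsto (fun k => Real.cos (2 / 3 * (β k * √(β k)) - π / 12)) Filter.atTop
      (nhds 0) := by
  set l : ℕ → ℝ := fun k => √(√(β k)) with hl
  have hlt : Filter.Tendsto l Filter.atTop Filter.atTop :=
    Real.tendsto_sqrt_atTop.comp (Real.tendsto_sqrt_atTop.comp hβ)
  set c : ℂ := √π * Complex.exp ((-(π / 12) : ℝ) * Complex.I) with hc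
  set ζ : ℕ → ℝ := fun k => 2 / 3 * (l k) ^ 6 with hζ
  set G : ℕ → ℂ := fun k => scorerMoment 0 (((l k ^ 4 : ℝ) : ℂ) * thirdRoot) with hG
  have hlim := tendsto_scorerMoment_ray.comp hlt
  have hdiff : Filter.Tendsto (fun k => (l k : ℂ) * G k - Complex.exp ((ζ k : ℝ) * Complex.I) * c)
      Filter.atTop (nhds 0) := by
    rw [tendsto_zero_iff_norm_tendsto_zero]
    have h0 := (tendsto_iff_norm_sub_tendsto_zero.1 hlim)
    refine h0.congr fun k => ?_
    have hfac : (l k : ℂ) * G k - Complex.exp ((ζ k : ℝ) * Complex.I) * c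
        = Complex.exp ((ζ k : ℝ) * Complex.I) *
          ((l k : ℂ) * Complex.exp (((-ζ k : ℝ) : ℂ) * Complex.I) * G k - c) := by
      have : Complex.exp ((ζ k : ℝ) * Complex.I) * Complex.exp (((-ζ k : ℝ) : ℂ) * Complex.I)
          = 1 := by
        rw [← Complex.exp_add]; simp
      linear_combination (-(l k : ℂ) * G k) * this
    rw [hfac, norm_mul, Complex.norm_exp_ofReal_mul_I, one_mul]
    rfl
  have hre := (Complex.continuous_re.tendsto _).comp hdiff
  have hreG : Filter.Tendsto (fun k => l k * (G k).re) Filter.atTop (nhds 0) := by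
    refine squeeze_zero_norm' ?_ (tendsto_inv_atTop_zero.comp hlt)
    filter_upwards [hlt.eventually_ge_atTop 1, hβ.eventually_ge_atTop 1] with k hk hβk
    have hl4 : l k ^ 4 = β k := by
      rw [show l k ^ 4 = (l k ^ 2) ^ 2 by ring, hl]
      simp only
      rw [Real.sq_sqrt (Real.sqrt_nonneg _), Real.sq_sqrt (by linarith)]
    have hzk := hz k
    simp only [raySum] at hzk
    have hb := (Complex.abs_re_le_norm _).trans
      (norm_scorerMoment_neg_le (by linarith : 0 < β k))
    rw [show -((β k : ℝ) : ℂ) = β k * (-1) by ring] at hb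
    have hGk : (G k).re = -(scorerMoment 0 (β k * (-1))).re / 2 := by
      simp only [hG, hl4]; linarith
    have hl0 : 0 < l k := by linarith
    rw [hGk, Real.norm_eq_abs, abs_mul, abs_of_pos hl0, abs_div, abs_neg, abs_two]
    have h1 : 1 / β k ≤ (l k)⁻¹ * (l k)⁻¹ := by
      rw [← hl4, ← mul_inv, one_div]
      gcongr
      nlinarith [pow_le_pow_left₀ zero_le_one hk 2]
    calc l k * (|(scorerMoment 0 (β k * (-1))).re| / 2) ≤ l k * ((l k)⁻¹ * (l k)⁻¹) := by
          gcongr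
          linarith [abs_nonneg (scorerMoment 0 (β k * (-1))).re]
      _ = (l k)⁻¹ := by field_simp
  have hcos := (hreG.sub hre).const_mul (√π)⁻¹
  simp only [Complex.zero_re, sub_zero, mul_zero] at hcos
  refine hcos.congr' ?_
  filter_upwards [hβ.eventually_ge_atTop 1] with k hβk
  have hl6 : l k ^ 6 = β k * √(β k) := by
    rw [show l k ^ 6 = (l k ^ 2) ^ 2 * l k ^ 2 by ring, hl]
    simp only
    rw [Real.sq_sqrt (Real.sqrt_nonneg _), Real.sq_sqrt (by linarith)]
  have hprod : Complex.exp ((ζ k : ℝ) * Complex.I) * c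
      = (√π : ℝ) * Complex.exp (((ζ k - π / 12 : ℝ) : ℂ) * Complex.I) := by
    rw [hc, mul_left_comm, ← Complex.exp_add]
    congr 2
    push_cast; ring
  have hspi : √π ≠ 0 := (Real.sqrt_pos.2 Real.pi_pos).ne'
  simp only [Function.comp_apply, Complex.sub_re, Complex.re_ofReal_mul, hprod,
    Complex.exp_ofReal_mul_I_re, sub_sub_cancel]
  rw [inv_mul_cancel_left₀ hspi, hζ]
  simp only [hl6]

/-- The Wronskian of two solutions of `y'' = -r y` is constant. -/
lemma wronskian_eq {f f' g g' : ℝ → ℂ} (hf : ∀ r, HasDerivAt f (f' r) r)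
    (hf' : ∀ r, HasDerivAt f' (-r * f r) r) (hg : ∀ r, HasDerivAt g (g' r) r)
    (hg' : ∀ r, HasDerivAt g' (-r * g r) r) (r : ℝ) :
    f r * g' r - f' r * g r = f 0 * g' 0 - f' 0 * g 0 := by
  have hd : ∀ r, HasDerivAt (fun r => f r * g' r - f' r * g r) 0 r := fun r => by
    refine (((hf r).mul (hg' r)).sub ((hf' r).mul (hg r))).congr_deriv ?_
    ring
  exact is_const_of_deriv_eq_zero (fun r => (hd r).differentiableAt) (fun r => (hd r).deriv) r 0

lemma IsAiry.hasDerivAt_ray {w : ℂ → ℂ} {w0 w0' : ℝ} (h : IsAiry w w0 w0') (r : ℝ) :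
    HasDerivAt (fun r : ℝ => w (r * thirdRoot)) (thirdRoot * deriv w (r * thirdRoot)) r :=
  (h.1 _).hasDerivAt.comp_ofReal_mul

lemma IsAiry.hasDerivAt_deriv_ray {w : ℂ → ℂ} {w0 w0' : ℝ} (h : IsAiry w w0 w0') (r : ℝ) :
    HasDerivAt (fun r : ℝ => thirdRoot * deriv w (r * thirdRoot)) (-r * w (r * thirdRoot)) r := by
  refine ((h.2.1 _).hasDerivAt.comp_ofReal_mul.const_mul thirdRoot).congr_deriv ?_
  rw [h.2.2.1]
  linear_combination (r : ℂ) * w (r * thirdRoot) * thirdRoot_cube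

lemma IsAiry.uplus {Ai Bi : ℂ → ℂ} (hAi : IsAiryAi Ai) (hBi : IsAiryBi Bi) :
    IsAiry (Uplus Ai Bi) (2 * (3 : ℝ) ^ (-(1 : ℝ) / 6) / Real.Gamma (2 / 3)) 0 := by
  obtain ⟨a1, a2, a3, a4, a5⟩ := hAi
  obtain ⟨b1, b2, b3, b4, b5⟩ := hBi
  have hd : deriv (Uplus Ai Bi) = fun z => (√3 : ℂ) * deriv Ai z + deriv Bi z := by
    ext z
    exact (((a1 z).hasDerivAt.const_mul _).add (b1 z).hasDerivAt).deriv
  refine ⟨(a1.const_mul _).add b1, ?_, fun z => ?_, ?_, ?_⟩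
  · rw [hd]
    exact (a2.const_mul _).add b2
  · have h2 : deriv (fun z => (√3 : ℂ) * deriv Ai z + deriv Bi z) z
        = (√3 : ℂ) * deriv (deriv Ai) z + deriv (deriv Bi) z :=
      (((a2 z).hasDerivAt.const_mul _).add (b2 z).hasDerivAt).deriv
    rw [hd, h2, a3, b3, Uplus]
    ring
  · have h : √3 * (3 : ℝ) ^ (-(2 : ℝ) / 3) = (3 : ℝ) ^ (-(1 : ℝ) / 6) := by
      rw [Real.sqrt_eq_rpow, ← Real.rpow_add (by norm_num)]; norm_num
    rw [Uplus, a4, b4, ← Complex.ofReal_mul, ← Complex.ofReal_add, ← h]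
    congr 1
    ring
  · have h : √3 * (3 : ℝ) ^ (-(1 : ℝ) / 3) = (3 : ℝ) ^ ((1 : ℝ) / 6) := by
      rw [Real.sqrt_eq_rpow, ← Real.rpow_add (by norm_num)]; norm_num
    rw [hd]
    simp only
    rw [a5, b5, ← Complex.ofReal_mul, ← Complex.ofReal_add, ← h]
    congr 1
    ring

lemma hasDerivAt_ofReal_raySum (r : ℝ) :
    HasDerivAt (fun r => (raySum r : ℂ)) (raySumDeriv r : ℂ) r :=
  (hasDerivAt_raySum r).ofReal_comp

lemma hasDerivAt_ofReal_raySumDeriv (r : ℝ) :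
    HasDerivAt (fun r => (raySumDeriv r : ℂ)) (-r * (raySum r : ℂ)) r := by
  simpa using (hasDerivAt_raySumDeriv r).ofReal_comp

lemma IsAiryAi.deriv_zero_ne_zero {Ai : ℂ → ℂ} (hAi : IsAiryAi Ai) : deriv Ai 0 ≠ 0 := by
  rw [hAi.2.2.2.2, Complex.ofReal_ne_zero]
  have h1 : 0 < Real.Gamma (1 / 3) := Real.Gamma_pos_of_pos (by norm_num)
  have h2 : (0 : ℝ) < (3 : ℝ) ^ (-(1 : ℝ) / 3) := by positivity
  exact div_ne_zero (neg_ne_zero.2 h2.ne') h1.ne'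

lemma raySumDeriv_ne_zero {Ai : ℂ → ℂ} (hAi : IsAiryAi Ai) {r : ℝ} (h : raySum r = 0) :
    raySumDeriv r ≠ 0 := by
  intro h'
  have hw := wronskian_eq hAi.hasDerivAt_ray hAi.hasDerivAt_deriv_ray
    hasDerivAt_ofReal_raySum hasDerivAt_ofReal_raySumDeriv r
  simp [h, h', raySumDeriv_zero, raySum_zero_pos.ne', hAi.deriv_zero_ne_zero,
    thirdRoot_ne_zero] at hw

lemma rayZeroModuli_uplus {Ai Bi : ℂ → ℂ} (hAi : IsAiryAi Ai) (hBi : IsAiryBi Bi) :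
    rayZeroModuli (Uplus Ai Bi) = {r | 0 < r ∧ raySum r = 0} := by
  have hU := IsAiry.uplus hAi hBi
  have hU0 : Uplus Ai Bi 0 ≠ 0 := by
    rw [hU.2.2.2.1, Complex.ofReal_ne_zero]
    have h1 : 0 < Real.Gamma (2 / 3) := Real.Gamma_pos_of_pos (by norm_num)
    positivity
  have hU0' : deriv (Uplus Ai Bi) 0 = 0 := by simpa using hU.2.2.2.2
  ext r
  simp only [rayZeroModuli, Set.mem_ofPred_eq, exp_pi_div_three]
  have hw := wronskian_eq hU.hasDerivAt_ray hU.hasDerivAt_deriv_ray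
    hasDerivAt_ofReal_raySum hasDerivAt_ofReal_raySumDeriv r
  have hw' := wronskian_eq hAi.hasDerivAt_ray hAi.hasDerivAt_deriv_ray
    hU.hasDerivAt_ray hU.hasDerivAt_deriv_ray r
  simp only [Complex.ofReal_zero, zero_mul, hU0', raySumDeriv_zero, mul_zero, sub_zero] at hw hw'
  refine and_congr_right fun _ => ⟨fun h => ?_, fun h => ?_⟩
  · have hne : thirdRoot * deriv (Uplus Ai Bi) (r * thirdRoot) ≠ 0 := by
      intro h'
      simp [h, h', hU0, hAi.deriv_zero_ne_zero, thirdRoot_ne_zero] at hw'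
    rw [h, zero_mul, zero_sub, neg_eq_zero] at hw
    exact_mod_cast (mul_eq_zero.1 hw).resolve_left hne
  · have hne := raySumDeriv_ne_zero hAi h
    rw [h, Complex.ofReal_zero, mul_zero, sub_zero] at hw
    exact (mul_eq_zero.1 hw).resolve_right (by exact_mod_cast hne)

lemma sqrt_delta_eq {b : ℝ} (hb : 0 ≤ b) :
    √((√3 * b / 2) ^ 3 / (√3 / 4 * (3 / 2) ^ 3)) = 2 / 3 * (b * √b) := by
  have h3 : √3 ^ 2 = 3 := Real.sq_sqrt (by norm_num)
  have hs : √3 ≠ 0 := (Real.sqrt_pos.2 (by norm_num)).ne'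
  have hbb : √b ^ 2 = b := Real.sq_sqrt hb
  rw [show (√3 * b / 2) ^ 3 / (√3 / 4 * (3 / 2) ^ 3) = (2 / 3 * (b * √b)) ^ 2 by
    rw [mul_pow, mul_pow b, hbb]
    field_simp
    rw [h3]
    ring]
  exact Real.sqrt_sq (by positivity)

/-- Asymptotics of the values `δ_k = (√3·β_k/2)³`:
`δ_k = (√3/4)(3/2)³(πk − 5π/12 + O(1/k))²` as `k → ∞` (here `β` enumerates the moduli
of the zeros of `U₊` on the ray `arg z = π/3` increasingly, indexed from `0`,
so `β (k-1)` is the paper's `β_k`). -/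
theorem delta_asymptotics (Ai Bi : ℂ → ℂ)
    (hAi : IsAiryAi Ai) (hBi : IsAiryBi Bi)
    (β : ℕ → ℝ) (hmono : StrictMono β)
    (hrange : Set.range β = rayZeroModuli (Uplus Ai Bi)) :
    ∃ C : ℝ, 0 < C ∧ ∀ k : ℕ,
      |Real.sqrt ((Real.sqrt 3 * β k / 2) ^ 3 / (Real.sqrt 3 / 4 * (3 / 2) ^ 3))
        - (π * (k + 1) - 5 * π / 12)| ≤ C / (k + 1) := by
  rw [rayZeroModuli_uplus hAi hBi] at hrange
  obtain ⟨φ, L, hlim, hL1, hL2, hphase⟩ := exists_phase_at_zeros hasDerivAt_raySum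
    hasDerivAt_raySumDeriv (fun r h => raySumDeriv_ne_zero hAi h) raySum_zero_pos
    raySumDeriv_zero hmono hrange
  have hpi := Real.pi_gt_three
  have hphase_lower : ∀ k : ℕ, 2 / 5 * ((k : ℝ) + 1) ≤ 2 / 3 * (β k * √(β k)) := by
    intro k
    obtain ⟨-, h2, h3, -⟩ := hphase k
    have hk : (0 : ℝ) ≤ k := k.cast_nonneg
    nlinarith
  have hβ : Filter.Tendsto β Filter.atTop Filter.atTop := by
    have hlow : Filter.Tendsto (fun k : ℕ => (2 / 5 * ((k : ℝ) + 1))) Filter.atTop Filter.atTop :=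
      (Filter.tendsto_atTop_add_const_right _ _ tendsto_natCast_atTop_atTop).const_mul_atTop
        (by norm_num)
    have hsq := hlow.eventually_gt_atTop
    refine Filter.tendsto_atTop.2 fun M => ?_
    filter_upwards [hsq (2 / 3 * (max M 1 * √(max M 1)))] with k hk
    by_contra h
    have hle : β k ≤ max M 1 := (not_le.1 h).le.trans (le_max_left _ _)
    have h1 := (hphase k).1
    have : β k * √(β k) ≤ max M 1 * √(max M 1) := by gcongr
    linarith [hphase_lower k]
  have hcos : Real.cos (L + π / 12) = 0 := by
    have hz : ∀ k, raySum (β k) = 0 := fun k =>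
      (hrange.subset (Set.mem_range_self k)).2
    have h1 := (tendsto_cos_of_raySum_zero hβ hz).abs
    have h2 : Filter.Tendsto (fun k => |Real.cos (φ (β k) + π / 12)|) Filter.atTop
        (nhds |Real.cos (L + π / 12)|) :=
      ((Real.continuous_cos.tendsto _).comp ((hlim.comp hβ).add_const _)).abs
    have h3 : ∀ k : ℕ, |Real.cos (2 / 3 * (β k * √(β k)) - π / 12)|
        = |Real.cos (φ (β k) + π / 12)| := by
      intro k
      rw [(hphase k).2.1, show ((k : ℝ) + 1) * π - φ (β k) - π / 12
        = ((k + 1 : ℕ) : ℝ) * π - (φ (β k) + π / 12) by push_cast; ring,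
        Real.cos_nat_mul_pi_sub, abs_mul, abs_pow, abs_neg, abs_one, one_pow, one_mul]
    have := tendsto_nhds_unique h2 (h1.congr h3)
    simpa using this
  have hL : L = 5 * π / 12 := by
    obtain ⟨n, hn⟩ := Real.cos_eq_zero_iff.1 hcos
    have hn1 : (-1 : ℝ) < n := by nlinarith
    have hn2 : (n : ℝ) < 1 := by nlinarith
    have : n = 0 := by
      have h1 : (-1 : ℤ) < n := by exact_mod_cast hn1
      have h2 : n < (1 : ℤ) := by exact_mod_cast hn2
      omega
    rw [this] at hn
    push_cast at hn
    linarith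
  refine ⟨25 / 72, by norm_num, fun k => ?_⟩
  obtain ⟨h1, h2, h3, h4⟩ := hphase k
  have hβ0 : 0 < β k := by linarith
  rw [sqrt_delta_eq hβ0.le, h2, ← hL, show ((k : ℝ) + 1) * π - φ (β k) - (π * (k + 1) - L)
    = L - φ (β k) by ring, abs_of_nonneg (by linarith)]
  have hk : (0 : ℝ) < (k : ℝ) + 1 := by positivity
  have hs : 0 < √(β k) := Real.sqrt_pos.2 hβ0
  have hlow := hphase_lower k
  have : 5 / 24 * (β k * √(β k))⁻¹ ≤ 25 / 72 / ((k : ℝ) + 1) := by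
    rw [← div_eq_mul_inv, div_le_div_iff₀ (by positivity) hk]
    linarith
  linarith
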